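/- Let n ≥ 1 be an integer, let m_1, …, m_{2n} be positive integers, and write the type-m matrix P(m) = !![a,b;c,d]. Then the rational number c/a equals the continued fraction [m_{2n}; m_{2n−1}, …, m_2] of odd length 2n−1, i.e. c/a = m_{2n} + 1/(m_{2n−1} + 1/(⋯ + 1/m_2)). -/

import Mathlib

/-!
The first column `(a, c)` of `typeM n m` is governed by left multiplication by `T ^ p * U ^ q`,
which sends it to `(a + q c, p (a + q c) + c)`. When `a, c > 0` the new ratio is
`p + c / (a + q c) = p + 1 / (q + 1 / (c / a))`, i.e. the continued fraction of `c / a` with the two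
new partial quotients `p, q` put in front. Induction on `n`, carrying the positivity of `a` and `c`,
gives the result; for `n = 1` the first column is `(1, m 2)`.
-/

open Matrix

/-- The matrix `T = !![1,0;1,1]` acting on the numerical Grothendieck group. -/
def Tmat : Matrix (Fin 2) (Fin 2) ℤ := !![1, 0; 1, 1]

/-- The matrix `U = !![1,1;0,1]`. -/
def Umat : Matrix (Fin 2) (Fin 2) ℤ := !![1, 1; 0, 1]

/-- The type-`m` matrix
`P(m) = T^{m_{2n}} * U^{m_{2n-1}} * T^{m_{2n-2}} * U^{m_{2n-3}} * ⋯ * T^{m_2} * U^{m_1}`. -/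
def typeM (n : ℕ) (m : ℕ → ℕ) : Matrix (Fin 2) (Fin 2) ℤ :=
  ((List.range n).map (fun i => Tmat ^ m (2 * (n - i)) * Umat ^ m (2 * (n - i) - 1))).prod

/-- The continued fraction `[a_1; a_2, …, a_k] = a_1 + 1/(a_2 + 1/(⋯ + 1/a_k))`.
(Note that in `ℚ` one has `0⁻¹ = 0`, so the empty tail contributes nothing.) -/
def contFrac : List ℚ → ℚ
  | [] => 0
  | a :: l => a + (contFrac l)⁻¹

lemma Tmat_pow (k : ℕ) : Tmat ^ k = !![1, 0; (k : ℤ), 1] := by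
  induction k with
  | zero => simp [Matrix.one_fin_two]
  | succ k ih => rw [pow_succ, ih, Tmat]; simp

lemma Umat_pow (k : ℕ) : Umat ^ k = !![1, (k : ℤ); 0, 1] := by
  induction k with
  | zero => simp [Matrix.one_fin_two]
  | succ k ih => rw [pow_succ, ih, Umat]; simp [add_comm]

lemma typeM_succ (n : ℕ) (m : ℕ → ℕ) :
    typeM (n + 1) m = Tmat ^ m (2 * n + 2) * Umat ^ m (2 * n + 1) * typeM n m := by
  unfold typeM
  rw [List.range_succ_eq_map, List.map_cons, List.prod_cons, List.map_map]
  congr 3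
  funext i
  simp [Nat.add_sub_add_right]

lemma typeM_succ_zero_zero (n : ℕ) (m : ℕ → ℕ) :
    typeM (n + 1) m 0 0 = typeM n m 0 0 + m (2 * n + 1) * typeM n m 1 0 := by
  rw [typeM_succ, Tmat_pow, Umat_pow]
  simp [Matrix.mul_apply, Fin.sum_univ_two]

lemma typeM_succ_one_zero (n : ℕ) (m : ℕ → ℕ) :
    typeM (n + 1) m 1 0 = m (2 * n + 2) * typeM (n + 1) m 0 0 + typeM n m 1 0 := by
  rw [typeM_succ_zero_zero, typeM_succ, Tmat_pow, Umat_pow]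
  simp [Matrix.mul_apply, Fin.sum_univ_two]
  ring

/-- Passing from `n + 1` to `n + 2` puts two new partial quotients in front. Starting at `n + 1`
keeps the length `2 * (n + 1) - 1` on the right from truncating. -/
lemma quotients_succ (n : ℕ) (m : ℕ → ℕ) :
    (List.range (2 * (n + 2) - 1)).map (fun i => (m (2 * (n + 2) - i) : ℚ)) =
      (m (2 * (n + 1) + 2) : ℚ) :: (m (2 * (n + 1) + 1) : ℚ) ::
        (List.range (2 * (n + 1) - 1)).map (fun i => (m (2 * (n + 1) - i) : ℚ)) := by
  rw [show 2 * (n + 2) - 1 = (2 * (n + 1) - 1) + 1 + 1 by omega, List.range_succ_eq_map,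
    List.range_succ_eq_map]
  simp only [List.map_cons, List.map_map]
  congr 2
  apply List.map_congr_left
  intro i _
  simp only [Function.comp]
  congr 2
  omega

/-- The continued fraction formula together with the positivity of the first column that the
induction needs. -/
lemma typeM_ratio_aux (m : ℕ → ℕ) (n : ℕ) (hm : ∀ i, 1 ≤ i → i ≤ 2 * (n + 1) → 0 < m i) :
    0 < typeM (n + 1) m 0 0 ∧ 0 < typeM (n + 1) m 1 0 ∧
    (typeM (n + 1) m 1 0 : ℚ) / (typeM (n + 1) m 0 0 : ℚ) =
      contFrac ((List.range (2 * (n + 1) - 1)).map (fun i => (m (2 * (n + 1) - i) : ℚ))) := by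
  induction n with
  | zero =>
    have h2 := hm 2 (by norm_num) (by norm_num)
    simp [typeM, Tmat_pow, Umat_pow, Matrix.mul_apply, Fin.sum_univ_two, contFrac, h2]
  | succ n ih =>
    obtain ⟨ha, hc, h⟩ := ih fun i h1 h2 => hm i h1 (by omega)
    have hp : 0 < m (2 * (n + 1) + 2) := hm _ (by omega) (by omega)
    have ha' : 0 < typeM (n + 1 + 1) m 0 0 := by
      rw [typeM_succ_zero_zero]; positivity
    refine ⟨ha', ?_, ?_⟩
    · rw [typeM_succ_one_zero]; positivity
    · rw [quotients_succ, contFrac, contFrac, ← h, typeM_succ_one_zero]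
      rw [typeM_succ_zero_zero] at ha' ⊢
      have haQ : (0 : ℚ) < typeM (n + 1) m 0 0 := by exact_mod_cast ha
      have hcQ : (0 : ℚ) < typeM (n + 1) m 1 0 := by exact_mod_cast hc
      push_cast
      generalize (typeM (n + 1) m 0 0 : ℚ) = a at *
      generalize (typeM (n + 1) m 1 0 : ℚ) = c at *
      have hq : (0 : ℚ) ≤ m (2 * (n + 1) + 1) := by positivity
      generalize (m (2 * (n + 1) + 1) : ℚ) = q at *
      have h1 : a + q * c ≠ 0 := by positivity
      have h2 : q + (c / a)⁻¹ = (a + q * c) / c := by field_simp; ring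
      rw [h2]
      field_simp

theorem typeM_ratio_eq_contFrac (n : ℕ) (hn : 1 ≤ n) (m : ℕ → ℕ)
    (hm : ∀ i, 1 ≤ i → i ≤ 2 * n → 0 < m i) :
    (typeM n m 1 0 : ℚ) / (typeM n m 0 0 : ℚ) =
      contFrac ((List.range (2 * n - 1)).map (fun i => (m (2 * n - i) : ℚ))) := by
  obtain ⟨k, rfl⟩ := Nat.exists_eq_add_of_le' hn
  exact (typeM_ratio_aux m k hm).2.2
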